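/- arXiv:2603.27588 — 3 statements merged into one kernel-verified Lean document; each statement's English description precedes it below -/
import Mathlib

section
/- For every integer k ≥ 1 and all natural numbers m₀, m₁, …, m_k, one has ∫_{Δ_k} (1 − t₁ − ⋯ − t_k)^{m₀} · t₁^{m₁} ⋯ t_k^{m_k} dt₁⋯dt_k = (m₀! · m₁! ⋯ m_k!) / (m₀ + m₁ + ⋯ + m_k + k)!. -/
open MeasureTheory

/-- The standard `k`-simplex `Δ_k = {t ∈ ℝ^k : tᵢ ≥ 0, ∑ tᵢ ≤ 1}`. -/
def stdSimplex' (k : ℕ) : Set (Fin k → ℝ) :=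
  {t | (∀ i, 0 ≤ t i) ∧ ∑ i, t i ≤ 1}

lemma aux_one (s : ℝ) (p : ℕ) : ∀ N : ℕ, ∫ x in (0:ℝ)..s, x ^ p * (s - x) ^ N =
    (Nat.factorial p : ℝ) * Nat.factorial N / Nat.factorial (N + p + 1) * s ^ (N + p + 1) := by
  induction p with
  | zero =>
    intro N
    have h := intervalIntegral.integral_comp_sub_left (a := 0) (b := s) (fun x : ℝ => x ^ N) s
    simp only [pow_zero, one_mul]
    rw [h]
    have : (Nat.factorial N : ℝ) ≠ 0 := by positivity
    simp [Nat.factorial_succ]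
    field_simp
  | succ p ih =>
    intro N
    have hN : (N : ℝ) + 1 ≠ 0 := by positivity
    have hd : ∀ x ∈ Set.uIcc 0 s, HasDerivAt
        (fun x : ℝ => - (x ^ (p + 1) * (s - x) ^ (N + 1)) / (N + 1))
        (x ^ (p + 1) * (s - x) ^ N - (p + 1) / (N + 1) * (x ^ p * (s - x) ^ (N + 1))) x := by
      intro x _
      have h1 : HasDerivAt (fun x : ℝ => x ^ (p + 1)) (((p + 1 : ℕ) : ℝ) * x ^ p) x := by
        simpa using hasDerivAt_pow (p + 1) x
      have h2 : HasDerivAt (fun x : ℝ => (s - x) ^ (N + 1))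
          (((N + 1 : ℕ) : ℝ) * (s - x) ^ N * (-1)) x := by
        have h3 : HasDerivAt (fun x : ℝ => s - x) (-1) x := (hasDerivAt_id x).const_sub s
        exact h3.pow (N + 1)
      refine HasDerivAt.congr_deriv ((h1.mul h2).neg.div_const ((N : ℝ) + 1)) ?_
      simp only [Nat.cast_add, Nat.cast_one]
      field_simp
      ring
    have h := intervalIntegral.integral_eq_sub_of_hasDerivAt hd
      (by apply Continuous.intervalIntegrable; fun_prop)
    rw [intervalIntegral.integral_sub (by apply Continuous.intervalIntegrable; fun_prop)
      (by apply Continuous.intervalIntegrable; fun_prop),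
      intervalIntegral.integral_const_mul, ih (N + 1)] at h
    simp only [sub_self, ne_eq, Nat.add_eq_zero_iff, one_ne_zero, and_false, not_false_eq_true,
      zero_pow, mul_zero, zero_mul, neg_zero, zero_div] at h
    rw [sub_eq_zero.mp h]
    have e : N + 1 + p + 1 = N + (p + 1) + 1 := by ring
    rw [e, Nat.factorial_succ p, Nat.factorial_succ N]
    push_cast
    field_simp

def auxS (k : ℕ) (s : ℝ) : Set (Fin k → ℝ) := {t | (∀ i, 0 ≤ t i) ∧ ∑ i, t i ≤ s}

lemma auxS_closed (k : ℕ) (s : ℝ) : IsClosed (auxS k s) := by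
  have : auxS k s = (⋂ i, {t | 0 ≤ t i}) ∩ {t | ∑ i, t i ≤ s} := by
    ext t; simp [auxS]
  rw [this]
  refine IsClosed.inter (isClosed_iInter fun i => isClosed_le ?_ ?_) (isClosed_le ?_ ?_) <;> fun_prop

lemma auxS_compact (k : ℕ) (s : ℝ) : IsCompact (auxS k s) := by
  refine (isCompact_Icc (a := (0 : Fin k → ℝ)) (b := fun _ => s)).of_isClosed_subset
    (auxS_closed k s) ?_
  rintro t ⟨h0, h1⟩
  exact ⟨fun i => h0 i, fun i =>
    (Finset.single_le_sum (fun j _ => h0 j) (Finset.mem_univ i)).trans h1⟩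

lemma aux_main (a k : ℕ) : ∀ (m : Fin k → ℕ) (s : ℝ), 0 ≤ s →
    ∫ t in auxS k s, (s - ∑ i, t i) ^ a * ∏ i, (t i) ^ (m i) =
      (Nat.factorial a : ℝ) * (∏ i, (Nat.factorial (m i) : ℝ)) /
        Nat.factorial (a + ∑ i, m i + k) * s ^ (a + ∑ i, m i + k) := by
  induction k with
  | zero =>
    intro m s hs
    have : auxS 0 s = Set.univ := by ext t; simp [auxS, hs]
    have h0 : (Nat.factorial a : ℝ) ≠ 0 := by positivity
    rw [this]
    have hv : (volume : Measure (Fin 0 → ℝ)) Set.univ = 1 := by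
      rw [Measure.volume_pi_eq_dirac 0]; simp
    simp [h0, integral_unique, Measure.real, hv]
  | succ k ih =>
    intro m s hs
    set F : (Fin (k + 1) → ℝ) → ℝ := (auxS (k + 1) s).indicator
      (fun t => (s - ∑ i, t i) ^ a * ∏ i, (t i) ^ (m i)) with hF
    have hint : Integrable F := by
      rw [hF, integrable_indicator_iff (auxS_closed _ _).measurableSet]
      apply ContinuousOn.integrableOn_compact (auxS_compact _ _)
      fun_prop
    have mp := (volume_preserving_piFinSuccAbove (fun _ : Fin (k + 1) => ℝ) 0).symm
    rw [← integral_indicator (auxS_closed _ _).measurableSet, ← hF,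
      ← mp.integral_comp' (g := F)]
    have hint2 := (mp.integrable_comp_emb (MeasurableEquiv.measurableEmbedding _)).mpr hint
    rw [Measure.volume_eq_prod] at hint2 ⊢
    simp only [Function.comp_def] at hint2
    rw [integral_prod _ hint2]
    have inner : ∀ x : ℝ, (∫ t : Fin k → ℝ,
        F ((MeasurableEquiv.piFinSuccAbove (fun _ : Fin (k + 1) => ℝ) 0).symm (x, t))) =
        (Set.Icc 0 s).indicator (fun x => (Nat.factorial a : ℝ) *
          (∏ i : Fin k, (Nat.factorial (m i.succ) : ℝ)) /
          Nat.factorial (a + ∑ i : Fin k, m i.succ + k) *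
          (x ^ m 0 * (s - x) ^ (a + ∑ i : Fin k, m i.succ + k))) x := by
      intro x
      have hx : ∀ t : Fin k → ℝ,
          (MeasurableEquiv.piFinSuccAbove (fun _ : Fin (k + 1) => ℝ) 0).symm (x, t)
            = Fin.cons x t := by
        intro t
        rw [← Fin.insertNth_zero']
        rfl
      simp only [hx]
      by_cases hxs : x ∈ Set.Icc 0 s
      · rw [Set.indicator_of_mem hxs]
        have : (fun t : Fin k → ℝ => F (Fin.cons x t : Fin (k + 1) → ℝ)) =
            (auxS k (s - x)).indicator
              (fun t => x ^ m 0 * ((s - x - ∑ i, t i) ^ a * ∏ i, (t i) ^ (m i.succ))) := by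
          funext t
          have hiff : (Fin.cons x t : Fin (k + 1) → ℝ) ∈ auxS (k + 1) s ↔
              t ∈ auxS k (s - x) := by
            simp only [auxS, Set.mem_setOf_eq, Fin.forall_fin_succ, Fin.cons_zero, Fin.cons_succ,
              Fin.sum_univ_succ, hxs.1, true_and, le_sub_iff_add_le']
          by_cases ht : t ∈ auxS k (s - x)
          · rw [hF, Set.indicator_of_mem (hiff.mpr ht), Set.indicator_of_mem ht]
            simp only [Fin.sum_univ_succ, Fin.prod_univ_succ, Fin.cons_zero, Fin.cons_succ]
            ring
          · rw [hF, Set.indicator_of_notMem (fun h => ht (hiff.mp h)), Set.indicator_of_notMem ht]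
        rw [this, integral_indicator (auxS_closed _ _).measurableSet, integral_const_mul,
          ih (fun i => m i.succ) (s - x) (by linarith [hxs.2])]
        ring
      · rw [Set.indicator_of_notMem hxs]
        have : ∀ t : Fin k → ℝ, F (Fin.cons x t : Fin (k + 1) → ℝ) = 0 := by
          intro t
          rw [hF, Set.indicator_of_notMem]
          rintro ⟨h0, h1⟩
          refine hxs ⟨h0 0, ?_⟩
          exact (Finset.single_le_sum (fun j _ => h0 j) (Finset.mem_univ 0)).trans h1
        simp [this]
    simp only [inner]
    rw [integral_indicator measurableSet_Icc, integral_Icc_eq_integral_Ioc,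
      ← intervalIntegral.integral_of_le hs, intervalIntegral.integral_const_mul, aux_one]
    rw [Fin.sum_univ_succ, Fin.prod_univ_succ]
    have e : a + (m 0 + ∑ i : Fin k, m i.succ) + (k + 1) =
      a + ∑ i : Fin k, m i.succ + k + m 0 + 1 := by ring
    rw [e]
    have : (Nat.factorial (a + ∑ i : Fin k, m i.succ + k) : ℝ) ≠ 0 := by positivity
    field_simp

/-- For every `k ≥ 1` and natural numbers `m₀, …, m_k`,
`∫_{Δ_k} (1 − t₁ − ⋯ − t_k)^{m₀} t₁^{m₁} ⋯ t_k^{m_k} dt = m₀!⋯m_k! / (m₀+⋯+m_k+k)!`. -/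
theorem simplex_beta_integral (k : ℕ) (hk : 1 ≤ k) (m : Fin (k + 1) → ℕ) :
    ∫ t in stdSimplex' k, (1 - ∑ i, t i) ^ (m 0) * ∏ i : Fin k, (t i) ^ (m i.succ) =
      ((∏ i, Nat.factorial (m i) : ℕ) : ℝ) /
        ((Nat.factorial ((∑ i, m i) + k) : ℕ) : ℝ) := by
  have h := aux_main (m 0) k (fun i => m i.succ) 1 zero_le_one
  rw [Fin.sum_univ_succ, Fin.prod_univ_succ]
  push_cast
  rw [one_pow, mul_one] at h
  exact h
end

section
/- Every strict 2-term L∞ algebra gives rise to a differential Lie crossed module: let (V₀, V₁, α, [·,·], [·,·]) be a strict 2-term L∞ algebra (i.e. the axioms (i)–(v) hold with [·,·,·] ≡ 0). Then: (a) the bracket [·,·] makes V₀ a Lie algebra (it is antisymmetric and satisfies the Jacobi identity); (b) the formula ⁅X,Y⁆ := [α(X), Y] defines an antisymmetric bilinear bracket on V₁ satisfying the Jacobi identity, making V₁ a Lie algebra; (c) α : V₁ → V₀ is a Lie algebra homomorphism, i.e. α(⁅X,Y⁆) = [α(X), α(Y)]; (d) for each x ∈ V₀ the map X ↦ [x,X]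 is a derivation of the bracket ⁅·,·⁆ on V₁, and x ↦ [x,·] is a Lie algebra action, i.e. [[x,y],X] = [x,[y,X]] − [y,[x,X]]; (e) the equivariance and Peiffer identities hold: α([x,X]) = [x, α(X)] and [α(X), Y] = ⁅X, Y⁆. -/
/-- Every strict 2-term L∞ algebra `(V₀, V₁, α, br₀, br₁)` (axioms (i)–(v) with the
trilinear bracket identically zero) gives rise to a differential Lie crossed module:
(a) `br₀` makes `V₀` a Lie algebra; (b) `⁅X,Y⁆ := br₁ (α X) Y` is an antisymmetric
bracket on `V₁` satisfying the Jacobi identity; (c) `α` is a Lie algebra homomorphism;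
(d) each `br₁ x` is a derivation of `⁅·,·⁆` and `x ↦ br₁ x` is a Lie algebra action;
(e) the equivariance and Peiffer identities hold. -/
theorem strict_twoTermLInfinity_gives_crossedModule
    (V₀ V₁ : Type) [AddCommGroup V₀] [Module ℝ V₀] [AddCommGroup V₁] [Module ℝ V₁]
    (α : V₁ →ₗ[ℝ] V₀) (br₀ : V₀ →ₗ[ℝ] V₀ →ₗ[ℝ] V₀) (br₁ : V₀ →ₗ[ℝ] V₁ →ₗ[ℝ] V₁)
    (hanti : ∀ x y, br₀ x y = - br₀ y x)
    (h_i : ∀ (x : V₀) (X : V₁), α (br₁ x X) = br₀ x (α X))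
    (h_ii : ∀ X Y : V₁, br₁ (α X) Y + br₁ (α Y) X = 0)
    (h_iii : ∀ x y z : V₀, br₀ x (br₀ y z) + br₀ y (br₀ z x) + br₀ z (br₀ x y) = 0)
    (h_iv : ∀ (x y : V₀) (X : V₁),
      br₁ x (br₁ y X) - br₁ y (br₁ x X) - br₁ (br₀ x y) X = 0) :
    -- (a) V₀ is a Lie algebra
    ((∀ x y : V₀, br₀ x y = - br₀ y x) ∧
     (∀ x y z : V₀, br₀ x (br₀ y z) + br₀ y (br₀ z x) + br₀ z (br₀ x y) = 0)) ∧
    -- (b) ⁅X,Y⁆ := br₁ (α X) Y is an antisymmetric bracket satisfying Jacobi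
    ((∀ X Y : V₁, br₁ (α X) Y = - br₁ (α Y) X) ∧
     (∀ X Y Z : V₁,
        br₁ (α X) (br₁ (α Y) Z) + br₁ (α Y) (br₁ (α Z) X)
          + br₁ (α Z) (br₁ (α X) Y) = 0)) ∧
    -- (c) α is a Lie algebra homomorphism
    (∀ X Y : V₁, α (br₁ (α X) Y) = br₀ (α X) (α Y)) ∧
    -- (d) br₁ x is a derivation of ⁅·,·⁆, and x ↦ br₁ x is a Lie algebra action
    ((∀ (x : V₀) (X Y : V₁),
        br₁ x (br₁ (α X) Y) = br₁ (α (br₁ x X)) Y + br₁ (α X) (br₁ x Y)) ∧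
     (∀ (x y : V₀) (X : V₁), br₁ (br₀ x y) X = br₁ x (br₁ y X) - br₁ y (br₁ x X))) ∧
    -- (e) equivariance and Peiffer identities
    ((∀ (x : V₀) (X : V₁), α (br₁ x X) = br₀ x (α X)) ∧
     (∀ X Y : V₁, br₁ (α X) Y = br₁ (α X) Y)) := by
  have anti : ∀ X Y : V₁, br₁ (α X) Y = - br₁ (α Y) X :=
    fun X Y => eq_neg_of_add_eq_zero_left (h_ii X Y)
  have act : ∀ (x y : V₀) (X : V₁), br₁ (br₀ x y) X = br₁ x (br₁ y X) - br₁ y (br₁ x X) :=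
    fun x y X => (sub_eq_zero.mp (h_iv x y X)).symm
  refine ⟨⟨hanti, h_iii⟩, ⟨anti, ?_⟩, fun X Y => h_i _ _, ⟨?_, act⟩, h_i, fun _ _ => rfl⟩
  · intro X Y Z
    rw [anti Z (br₁ (α X) Y), h_i, act, anti Z X, map_neg]
    abel
  · intro x X Y
    rw [h_i, act]
    abel
end

section
/- Let V₀, V₁ be real vector spaces, r ≥ 1, and P : V₀^r × V₁ → ℝ multilinear and symmetric in its first r arguments. Let g₀ : V₀ → V₀ and g₁ : V₁ → V₁ and τ : V₀ → V₁ be linear and g₂ : V₀ × V₀ → V₁ bilinear, and assume the three invariance laws: (I1) P(g₀(x₁),…,g₀(x_r); g₁(X)) = P(x₁,…,x_r; X) for all x₁,…,x_r ∈ V₀, X ∈ V₁; (I2) P(g₀(x₁),…,g₀(x_r); g₂(y,z)) = −Σ_{i=1}^{r} P(g₀(x₁),…,g₀(z),…,g₀(x_r); g₂(y,x_i)) (g₀(z) replacing g₀(x_i) in the i-th slot); (I3) P(x₁,…,x_r; τ(y)) = −Σ_{i=1}^{r} P(x₁,…,y,…,x_r; τ(x_i)) (y replacing x_i in the i-th slot).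 Then for all x, y ∈ V₀ and X ∈ V₁: P(g₀(x),…,g₀(x); g₁(X − τ(x)) + g₂(y,x)) = P(x,…,x; X). (This is the pointwise algebraic content of the Proposition that the higher invariant form ⟨𝓕ⁿ;𝓗⟩ is invariant under 2-term L∞ algebra 1-gauge transformations, with x the value of the curvature 𝓕, X the value of 𝓗, and y the value of A − σ_g.) -/
/-- Pointwise algebraic content of the gauge invariance of the higher invariant form
`⟨𝓕ⁿ;𝓗⟩`: if `P : V₀^r × V₁ → ℝ` is multilinear, symmetric in its first `r` arguments,
and satisfies the three invariance laws (I1)–(I3) with respect to linear maps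
`g₀ : V₀ → V₀`, `g₁ : V₁ → V₁`, `τ : V₀ → V₁` and a bilinear map `g₂ : V₀ × V₀ → V₁`,
then `P(g₀x,…,g₀x; g₁(X − τx) + g₂(y,x)) = P(x,…,x; X)`. -/
theorem gauge_invariance_pointwise
    (V₀ V₁ : Type) [AddCommGroup V₀] [Module ℝ V₀] [AddCommGroup V₁] [Module ℝ V₁]
    (r : ℕ) (hr : 1 ≤ r)
    (P : MultilinearMap ℝ (fun _ : Fin r => V₀) (V₁ →ₗ[ℝ] ℝ))
    (hsymm : ∀ (v : Fin r → V₀) (σ : Equiv.Perm (Fin r)), P (v ∘ σ) = P v)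
    (g₀ : V₀ →ₗ[ℝ] V₀) (g₁ : V₁ →ₗ[ℝ] V₁) (τ : V₀ →ₗ[ℝ] V₁)
    (g₂ : V₀ →ₗ[ℝ] V₀ →ₗ[ℝ] V₁)
    (hI1 : ∀ (v : Fin r → V₀) (X : V₁),
      P (fun i => g₀ (v i)) (g₁ X) = P v X)
    (hI2 : ∀ (v : Fin r → V₀) (y z : V₀),
      P (fun i => g₀ (v i)) (g₂ y z) =
        - ∑ i : Fin r,
            P (Function.update (fun j => g₀ (v j)) i (g₀ z)) (g₂ y (v i)))
    (hI3 : ∀ (v : Fin r → V₀) (y : V₀),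
      P v (τ y) = - ∑ i : Fin r, P (Function.update v i y) (τ (v i))) :
    ∀ (x y : V₀) (X : V₁),
      P (fun _ => g₀ x) (g₁ (X - τ x) + g₂ y x) = P (fun _ => x) X := by
  intro x y X
  have upd : ∀ (a : V₀) (i : Fin r), Function.update (fun _ : Fin r => a) i a = fun _ => a := by
    intro a i
    exact Function.update_eq_self i (fun _ : Fin r => a)
  have h2 := hI2 (fun _ => x) y x
  have h3 := hI3 (fun _ => x) x
  have h1 := hI1 (fun _ => x) (X - τ x)
  simp only [upd, Finset.sum_const, Finset.card_univ, Fintype.card_fin, nsmul_eq_mul] at h2 h3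
  have hpos : (0 : ℝ) < 1 + r := by positivity
  have e2 : P (fun _ => g₀ x) (g₂ y x) = 0 := by
    have : (1 + (r : ℝ)) * P (fun _ => g₀ x) (g₂ y x) = 0 := by linarith
    exact (mul_eq_zero.mp this).resolve_left hpos.ne'
  have e3 : P (fun _ => x) (τ x) = 0 := by
    have : (1 + (r : ℝ)) * P (fun _ => x) (τ x) = 0 := by linarith
    exact (mul_eq_zero.mp this).resolve_left hpos.ne'
  rw [map_add, h1, map_sub, e2, e3]
  simp
end
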